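/- For any T ≥ 1 and any ε ∈ (0,1], the sum ∑_{t=1}^{T} ε(1-ε)^{t-1} (T - t) is at least (ε T²)/8 whenever εT ≤ 1 and T ≥ 4. (This gives the Ω(εT²) compounding-error lower bound in the Unicycle MDP.) -/

import Mathlib

/-!
The factor `ε * (1 - ε) ^ t` is the probability that the first error occurs at step `t`, counted
from `0`, and such an error costs one unit at each of the `T - (t + 1)` later steps. Counting the
cost step by step instead, step `m` costs the probability `1 - (1 - ε) ^ m` of an error before it.
Bernoulli's inequality bounds that probability below by `m * ε / (1 + m * ε)`, hence by
`m * ε / (1 + T * ε)`, whose sum over `m < T` is quadratic in `T` while `ε * T` stays bounded.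
-/

open Finset

theorem sum_range_mul_sub_eq_sum_sum_range {R : Type*} [Ring R] (f : ℕ → R) (n : ℕ) :
    ∑ t ∈ range n, f t * ((n : R) - (t + 1)) = ∑ m ∈ range n, ∑ t ∈ range m, f t := by
  induction n with
  | zero => simp
  | succ n ih =>
    rw [sum_range_succ, sum_range_succ, ← ih, ← sum_add_distrib, Nat.cast_succ, sub_self,
      mul_zero, add_zero]
    refine sum_congr rfl fun t _ => ?_
    noncomm_ring

theorem sum_range_mul_one_sub_pow {R : Type*} [Ring R] (x : R) (n : ℕ) :
    ∑ t ∈ range n, x * (1 - x) ^ t = 1 - (1 - x) ^ n := by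
  simpa only [sub_sub_cancel, mul_sum] using mul_neg_geom_sum (1 - x) n

theorem sum_range_natCast {K : Type*} [DivisionRing K] [CharZero K] (n : ℕ) :
    ∑ m ∈ range n, (m : K) = n * ((n : K) - 1) / 2 := by
  rw [← Nat.cast_sum, sum_range_id, ← Nat.choose_two_right, Nat.cast_choose_two]

section OrderedField

variable {K : Type*} [Field K] [LinearOrder K] [IsStrictOrderedRing K]

theorem one_sub_pow_le_inv_one_add_mul {x : K} (hx₀ : 0 ≤ x) (hx₁ : x ≤ 1) (n : ℕ) :
    (1 - x) ^ n ≤ (1 + n * x)⁻¹ := by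
  rw [← one_div, le_div_iff₀ (by positivity)]
  calc (1 - x) ^ n * (1 + n * x)
      ≤ (1 - x) ^ n * (1 + x) ^ n :=
        mul_le_mul_of_nonneg_left (one_add_mul_le_pow (by linarith) n)
          (pow_nonneg (sub_nonneg.2 hx₁) n)
    _ = (1 - x ^ 2) ^ n := by rw [← mul_pow]; ring
    _ ≤ 1 := pow_le_one₀ (sub_nonneg.2 (pow_le_one₀ hx₀ hx₁)) (sub_le_self 1 (sq_nonneg x))

theorem mul_div_one_add_mul_le_one_sub_one_sub_pow {x : K} (hx₀ : 0 ≤ x) (hx₁ : x ≤ 1) (n : ℕ) :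
    n * x / (1 + n * x) ≤ 1 - (1 - x) ^ n :=
  calc n * x / (1 + n * x) = 1 - (1 + n * x)⁻¹ := by
        rw [← one_div, one_sub_div (by positivity), add_sub_cancel_left]
    _ ≤ 1 - (1 - x) ^ n := sub_le_sub_left (one_sub_pow_le_inv_one_add_mul hx₀ hx₁ n) 1

theorem unicycle_compounding_lower_bound_general (T : ℕ) {ε : K} (hε₀ : 0 ≤ ε) (hε₁ : ε ≤ 1) :
    ε * (T * ((T : K) - 1)) / (2 * (1 + ε * T)) ≤
      ∑ t ∈ range T, ε * (1 - ε) ^ t * ((T : K) - (t + 1)) :=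
  calc ε * (T * ((T : K) - 1)) / (2 * (1 + ε * T))
      = ∑ m ∈ range T, m * ε / (1 + T * ε) := by
        rw [← sum_div, ← sum_mul, sum_range_natCast]
        field_simp
    _ ≤ ∑ m ∈ range T, m * ε / (1 + m * ε) := by
        gcongr with m hm
        exact (mem_range.1 hm).le
    _ ≤ ∑ m ∈ range T, (1 - (1 - ε) ^ m) :=
        sum_le_sum fun m _ => mul_div_one_add_mul_le_one_sub_one_sub_pow hε₀ hε₁ m
    _ = ∑ t ∈ range T, ε * (1 - ε) ^ t * ((T : K) - (t + 1)) := by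
        simp only [sum_range_mul_sub_eq_sum_sum_range, sum_range_mul_one_sub_pow]

end OrderedField

/-- ∑_{t=1}^{T} ε(1-ε)^{t-1}(T - t) ≥ εT²/8 when 0 < ε ≤ 1, εT ≤ 1, T ≥ 4. -/
theorem unicycle_compounding_lower_bound (T : ℕ) (hT : 4 ≤ T) (ε : ℝ)
    (hε : 0 < ε) (hε1 : ε ≤ 1) (hεT : ε * T ≤ 1) :
    ε * (T : ℝ) ^ 2 / 8 ≤
      ∑ t ∈ Finset.range T, ε * (1 - ε) ^ t * ((T : ℝ) - (t + 1)) := by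
  have hT' : (4 : ℝ) ≤ T := by exact_mod_cast hT
  have half_le : (T : ℝ) / 2 ≤ T - 1 := by linarith
  calc ε * (T : ℝ) ^ 2 / 8 = ε * (T * (T / 2)) / (2 * (1 + 1)) := by ring
    _ ≤ ε * (T * (T - 1)) / (2 * (1 + 1)) := by gcongr
    _ ≤ ε * (T * (T - 1)) / (2 * (1 + ε * T)) := by
        have : (0 : ℝ) ≤ T - 1 := by linarith
        gcongr
    _ ≤ ∑ t ∈ Finset.range T, ε * (1 - ε) ^ t * ((T : ℝ) - (t + 1)) :=
        unicycle_compounding_lower_bound_general T hε.le hε1
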